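/- Let W be a Weyl candidate on Minkowski space V and n a unit timelike vector. Then the right dual W* is again a Weyl candidate, and its electric and magnetic parts with respect to n satisfy E(W*) = B(W) and B(W*) = −E(W). -/

import Mathlib

noncomputable section

/-- Minkowski space `V = ℝ⁴`. -/
abbrev V4 : Type := Fin 4 → ℝ

/-- The Minkowski bilinear form of signature `(-,+,+,+)`. -/
def η (x y : V4) : ℝ := -(x 0 * y 0) + x 1 * y 1 + x 2 * y 2 + x 3 * y 3

/-- The standard basis of `V4`. -/
def e4 (a : Fin 4) : V4 := Pi.single a 1

/-- Components of the Minkowski metric `diag(-1,1,1,1)` (its own inverse). -/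
def ηm (a b : Fin 4) : ℝ := if a = b then (if a = (0 : Fin 4) then -1 else 1) else 0

/-- A 4-linear form on `V4`, given by its components in the standard basis. -/
abbrev T4 : Type := Fin 4 → Fin 4 → Fin 4 → Fin 4 → ℝ

/-- A bilinear form on `V4`, given by its components in the standard basis. -/
abbrev T2 : Type := Fin 4 → Fin 4 → ℝ

/-- Evaluation of a 4-linear form (given by components) on vectors. -/
def eval4 (W : T4) (x y z w : V4) : ℝ :=
  ∑ a : Fin 4, ∑ b : Fin 4, ∑ c : Fin 4, ∑ d : Fin 4, W a b c d * x a * y b * z c * w d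

/-- The alternating volume 4-form with `vol(e₀,e₁,e₂,e₃) = 1`. -/
def volv (x y z w : V4) : ℝ := Matrix.det (Matrix.of ![x, y, z, w])

/-- Components `η_{αβγδ}` of the volume form. -/
def volc (a b c d : Fin 4) : ℝ := volv (e4 a) (e4 b) (e4 c) (e4 d)

/-- Left dual `(*W)_{μνλρ} = ½ η_{μν}{}^{αβ} W_{αβλρ}`. -/
def leftDual (W : T4) : T4 := fun μ ν lam ρ =>
  (1/2) * ∑ γ : Fin 4, ∑ δ : Fin 4, ∑ a : Fin 4, ∑ b : Fin 4,
    volc μ ν γ δ * ηm γ a * ηm δ b * W a b lam ρ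

/-- Right dual `(W*)_{μνλρ} = ½ W_{μν}{}^{αβ} η_{αβλρ}`. -/
def rightDual (W : T4) : T4 := fun μ ν lam ρ =>
  (1/2) * ∑ γ : Fin 4, ∑ δ : Fin 4, ∑ a : Fin 4, ∑ b : Fin 4,
    W μ ν a b * ηm a γ * ηm b δ * volc γ δ lam ρ

/-- A Weyl candidate: pair antisymmetries, pair exchange, first Bianchi, trace-free. -/
def IsWeyl (W : T4) : Prop :=
  (∀ x y z w : V4, eval4 W x y z w = - eval4 W y x z w) ∧
  (∀ x y z w : V4, eval4 W x y z w = - eval4 W x y w z) ∧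
  (∀ x y z w : V4, eval4 W x y z w = eval4 W z w x y) ∧
  (∀ x y z w : V4, eval4 W x y z w + eval4 W x z w y + eval4 W x w y z = 0) ∧
  (∀ x y : V4, ∑ a : Fin 4, ∑ b : Fin 4, ηm a b * eval4 W (e4 a) x (e4 b) y = 0)

/-- Electric part `E(W)_{ab} = W(e_a, n, e_b, n)`. -/
def Epart (W : T4) (n : V4) : T2 := fun a b => eval4 W (e4 a) n (e4 b) n

/-- Magnetic part `B(W)_{ab} = (W*)(e_a, n, e_b, n)`. -/
def Bpart (W : T4) (n : V4) : T2 := fun a b => eval4 (rightDual W) (e4 a) n (e4 b) n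

/-- Raise both indices of a bilinear form's components. -/
def up2 (S : T2) : T2 := fun a b => ∑ c : Fin 4, ∑ d : Fin 4, ηm a c * ηm b d * S c d

/-- Full contraction `S_{ab} T^{ab}`. -/
def contr2 (S T : T2) : ℝ := ∑ a : Fin 4, ∑ b : Fin 4, S a b * up2 T a b

theorem eval4_e4 (W : T4) (a b c d : Fin 4) :
    eval4 W (e4 a) (e4 b) (e4 c) (e4 d) = W a b c d := by
  simp [eval4, e4, Pi.single_apply]

theorem eval4_swap_first (W : T4) (x y z w : V4) :
    eval4 W y x z w = eval4 (fun a b c d => W b a c d) x y z w := by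
  unfold eval4
  rw [Finset.sum_comm]
  exact Fintype.sum_congr _ _ fun a => Fintype.sum_congr _ _ fun b =>
    Fintype.sum_congr _ _ fun c => Fintype.sum_congr _ _ fun d => by ring

theorem eval4_swap_middle (W : T4) (x y z w : V4) :
    eval4 W x z y w = eval4 (fun a b c d => W a c b d) x y z w := by
  unfold eval4
  refine Fintype.sum_congr _ _ fun a => ?_
  rw [Finset.sum_comm]
  exact Fintype.sum_congr _ _ fun b =>
    Fintype.sum_congr _ _ fun c => Fintype.sum_congr _ _ fun d => by ring

theorem eval4_swap_last (W : T4) (x y z w : V4) :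
    eval4 W x y w z = eval4 (fun a b c d => W a b d c) x y z w := by
  unfold eval4
  refine Fintype.sum_congr _ _ fun a => Fintype.sum_congr _ _ fun b => ?_
  rw [Finset.sum_comm]
  exact Fintype.sum_congr _ _ fun c => Fintype.sum_congr _ _ fun d => by ring

theorem eval4_add (W W' : T4) (x y z w : V4) :
    eval4 (W + W') x y z w = eval4 W x y z w + eval4 W' x y z w := by
  simp only [eval4, Pi.add_apply, add_mul, Finset.sum_add_distrib]

theorem eval4_neg (W : T4) (x y z w : V4) : eval4 (-W) x y z w = -eval4 W x y z w := by
  simp only [eval4, Pi.neg_apply, neg_mul, Finset.sum_neg_distrib]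

theorem eval4_zero (x y z w : V4) : eval4 0 x y z w = 0 := by
  simp [eval4]

theorem sum_ηm_mul (f : Fin 4 → Fin 4 → ℝ) :
    ∑ a, ∑ b, ηm a b * f a b = -f 0 0 + f 1 1 + f 2 2 + f 3 3 := by
  simp [ηm, Fin.sum_univ_four]

theorem eval4_e4_first_third (W : T4) (a b : Fin 4) (x y : V4) :
    eval4 W (e4 a) x (e4 b) y = ∑ c, ∑ d, W a c b d * x c * y d := by
  simp [eval4, e4, Pi.single_apply]

/-- The Weyl candidate conditions in terms of components. -/
theorem isWeyl_iff (W : T4) : IsWeyl W ↔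
    (∀ a b c d, W a b c d = -W b a c d) ∧
    (∀ a b c d, W a b c d = -W a b d c) ∧
    (∀ a b c d, W a b c d = W c d a b) ∧
    (∀ a b c d, W a b c d + W a c d b + W a d b c = 0) ∧
    (∀ a b, -W 0 a 0 b + W 1 a 1 b + W 2 a 2 b + W 3 a 3 b = 0) := by
  constructor
  · rintro ⟨h₁, h₂, h₃, h₄, h₅⟩
    refine ⟨fun a b c d => ?_, fun a b c d => ?_, fun a b c d => ?_, fun a b c d => ?_,
      fun a b => ?_⟩
    · simpa only [eval4_e4] using h₁ (e4 a) (e4 b) (e4 c) (e4 d)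
    · simpa only [eval4_e4] using h₂ (e4 a) (e4 b) (e4 c) (e4 d)
    · simpa only [eval4_e4] using h₃ (e4 a) (e4 b) (e4 c) (e4 d)
    · simpa only [eval4_e4] using h₄ (e4 a) (e4 b) (e4 c) (e4 d)
    · simpa only [eval4_e4, sum_ηm_mul] using h₅ (e4 a) (e4 b)
  · rintro ⟨h₁, h₂, h₃, h₄, h₅⟩
    refine ⟨fun x y z w => ?_, fun x y z w => ?_, fun x y z w => ?_, fun x y z w => ?_,
      fun x y => ?_⟩
    · rw [eval4_swap_first W x y, ← eval4_neg]
      congr 1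
      funext a b c d
      exact h₁ a b c d
    · rw [eval4_swap_last W x y z w, ← eval4_neg]
      congr 1
      funext a b c d
      exact h₂ a b c d
    · rw [eval4_swap_middle W z x w y, eval4_swap_first _ x z, eval4_swap_last _ x z y w,
        eval4_swap_middle _ x y z w]
      congr 1
      funext a b c d
      exact h₃ a b c d
    · rw [eval4_swap_last W x z y w, eval4_swap_middle _ x y z w,
        eval4_swap_middle W x y w z, eval4_swap_last _ x y z w, ← eval4_add, ← eval4_add,
        ← eval4_zero x y z w]
      congr 1
      funext a b c d
      exact h₄ a b c d
    · simp only [sum_ηm_mul, eval4_e4_first_third, ← Finset.sum_neg_distrib,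
        ← Finset.sum_add_distrib]
      exact Finset.sum_eq_zero fun c _ => Finset.sum_eq_zero fun d _ => by
        linear_combination x c * y d * h₅ c d

theorem rightDual_eq_sum (W : T4) (a b c d : Fin 4) :
    rightDual W a b c d =
      (1 / 2) * ∑ i, ∑ j, W a b i j * ηm i i * ηm j j * volc i j c d := by
  simp only [rightDual]
  congr 1
  refine Fintype.sum_congr _ _ fun i => Fintype.sum_congr _ _ fun j => ?_
  rw [Fintype.sum_eq_single i fun k hk => by simp [ηm, hk],
    Fintype.sum_eq_single j fun k hk => by simp [ηm, hk]]

set_option maxHeartbeats 1000000 in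
/-- The components of the right dual of a form antisymmetric in its last pair of indices. -/
theorem rightDual_apply {W : T4} (hW : ∀ a b c d, W a b c d = -W a b d c) (a b c d : Fin 4) :
    rightDual W a b c d =
      ![![0, W a b 2 3, W a b 3 1, W a b 1 2],
        ![W a b 3 2, 0, W a b 3 0, W a b 0 2],
        ![W a b 1 3, W a b 0 3, 0, W a b 1 0],
        ![W a b 2 1, W a b 2 0, W a b 0 1, 0]] c d := by
  have h₁ := hW a b 1 0
  have h₂ := hW a b 2 0
  have h₃ := hW a b 3 0
  have h₄ := hW a b 2 1
  have h₅ := hW a b 3 1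
  have h₆ := hW a b 3 2
  rw [rightDual_eq_sum]
  fin_cases c <;> fin_cases d <;>
    simp [ηm, volc, volv, e4, Matrix.det_succ_row_zero, Fin.sum_univ_succ,
      Fin.succAbove, Pi.single_apply] <;>
    linarith

theorem rightDual_antisymm_last {W : T4} (hW : ∀ a b c d, W a b c d = -W a b d c)
    (a b c d : Fin 4) : rightDual W a b c d = -rightDual W a b d c := by
  simp only [rightDual_apply hW]
  fin_cases c <;> fin_cases d <;> simp <;> exact hW a b _ _

theorem rightDual_rightDual {W : T4} (hW : ∀ a b c d, W a b c d = -W a b d c) :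
    rightDual (rightDual W) = -W := by
  funext a b c d
  rw [rightDual_apply (rightDual_antisymm_last hW)]
  simp only [rightDual_apply hW, Pi.neg_apply]
  fin_cases c <;> fin_cases d <;> simp <;> linarith [hW a b 0 0, hW a b 1 1, hW a b 2 2,
    hW a b 3 3, hW a b 1 0, hW a b 2 0, hW a b 3 0, hW a b 2 1, hW a b 3 1, hW a b 3 2]

set_option maxHeartbeats 4000000 in
theorem isWeyl_rightDual {W : T4} (hW : IsWeyl W) : IsWeyl (rightDual W) := by
  rw [isWeyl_iff] at hW ⊢
  obtain ⟨h₁, h₂, h₃, h₄, h₅⟩ := hW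
  have hz : ∀ a c d, W a a c d = 0 := fun a c d => by linarith [h₁ a a c d]
  have hz' : ∀ a b c, W a b c c = 0 := fun a b c => by linarith [h₂ a b c c]
  have trace := h₅
  have bianchi := h₄ 0 1 2 3
  simp only [Fin.forall_fin_succ] at trace
  simp [hz, hz', h₁ 1 0, h₁ 2 0, h₁ 3 0, h₁ 2 1, h₁ 1 3, h₁ 3 2,
    h₂ _ _ 1 0, h₂ _ _ 2 0, h₂ _ _ 3 0, h₂ _ _ 2 1, h₂ _ _ 1 3, h₂ _ _ 3 2,
    h₃ 0 2 0 1, h₃ 0 3 0 1, h₃ 0 3 0 2, h₃ 2 3 0 2, h₃ 2 3 0 3,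
    h₃ 3 1 0 1, h₃ 3 1 0 3, h₃ 1 2 0 1, h₃ 1 2 0 2,
    h₃ 3 1 2 3, h₃ 1 2 2 3, h₃ 1 2 3 1] at trace
  refine ⟨fun a b c d => ?_, rightDual_antisymm_last h₂, fun a b c d => ?_, fun a b c d => ?_,
    fun a b => ?_⟩
  · simp only [rightDual, h₁ a b, neg_mul, Finset.sum_neg_distrib, mul_neg]
  -- The remaining identities hold componentwise, as linear consequences of `trace` and `bianchi`.
  on_goal 3 => fin_cases a <;> fin_cases b
  on_goal 2 => fin_cases a <;> fin_cases b <;> fin_cases c <;> fin_cases d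
  on_goal 1 => fin_cases a <;> fin_cases b <;> fin_cases c <;> fin_cases d
  all_goals
    simp [rightDual_apply h₂, hz, h₁ 1 0, h₁ 2 0, h₁ 3 0, h₁ 2 1, h₁ 1 3, h₁ 3 2,
      h₂ _ _ 1 0, h₂ _ _ 2 0, h₂ _ _ 3 0, h₂ _ _ 2 1, h₂ _ _ 1 3, h₂ _ _ 3 2,
      h₃ 0 2 0 1, h₃ 0 3 0 1, h₃ 0 3 0 2, h₃ 2 3 0 1, h₃ 2 3 0 2, h₃ 2 3 0 3,
      h₃ 3 1 0 1, h₃ 3 1 0 2, h₃ 3 1 0 3, h₃ 1 2 0 1, h₃ 1 2 0 2, h₃ 1 2 0 3,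
      h₃ 3 1 2 3, h₃ 1 2 2 3, h₃ 1 2 3 1] <;>
    linarith

/-- the right dual of a Weyl candidate is again a Weyl candidate, with
`E(W*) = B(W)` and `B(W*) = −E(W)`. -/
theorem stmt_9 (W : T4) (hW : IsWeyl W) (n : V4) (hn : η n n = -1) :
    IsWeyl (rightDual W) ∧
    (∀ a b, Epart (rightDual W) n a b = Bpart W n a b) ∧
    (∀ a b, Bpart (rightDual W) n a b = -(Epart W n a b)) := by
  refine ⟨isWeyl_rightDual hW, fun a b => rfl, fun a b => ?_⟩
  simp only [Bpart, Epart, rightDual_rightDual ((isWeyl_iff W).1 hW).2.1, eval4_neg]
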